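/- Fix x₀ > 0 and L > 3x₀, let γ be the critical curve with curvature H and normal N = γ̇^⊥, and let λ = 2L/(L+x₀). Let φ, φ_τ ∈ C^∞([0,2L], ℝ) with φ(0) = φ(2L) = φ_τ(0) = φ_τ(2L) = 0, set X = φN + φ_τγ̇, γ_t = γ + tX, and define F(t) = ∫₀^{2L} |γ̇_t(s)|⁴/⟨γ̇_t(s), γ̈_t(s)^⊥⟩ ds (well defined for |t| small). Then F is twice differentiable at t = 0 and F''(0) = ∫₀^{2L} (2H φ² − 2φ̇²/H + 2φ̈²/H³) ds + λ·∫₀^{2L} (H φ_τ² + 2φ·φ̇_τ) ds − [2φ̇(s)φ̇_τ(s)/H(s)²] evaluated from s = 0 to s = 2L. -/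

import Mathlib

open Real Set Filter

noncomputable def sig (x0 L : ℝ) : ℝ := π * Real.sqrt (x0 / (L + x0))

noncomputable def kap (x0 L : ℝ) : ℝ := L / Real.sin (sig x0 L)

noncomputable def Hc (x0 L s : ℝ) : ℝ :=
  π / (sig x0 L * Real.sqrt (kap x0 L ^ 2 - (s - L) ^ 2))

noncomputable def xc (x0 L s : ℝ) : ℝ :=
  -(kap x0 L / 2) *
    ((sig x0 L / (π + sig x0 L)) *
        Real.sin (((π + sig x0 L) / sig x0 L) * Real.arcsin ((s - L) / kap x0 L)) +
      (sig x0 L / (π - sig x0 L)) *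
        Real.sin (((π - sig x0 L) / sig x0 L) * Real.arcsin ((s - L) / kap x0 L)))

noncomputable def yc (x0 L s : ℝ) : ℝ :=
  kap x0 L / 2 *
    ((sig x0 L / (π + sig x0 L)) *
        Real.cos (((π + sig x0 L) / sig x0 L) * Real.arcsin ((s - L) / kap x0 L)) +
      (sig x0 L / (π - sig x0 L)) *
        Real.cos (((π - sig x0 L) / sig x0 L) * Real.arcsin ((s - L) / kap x0 L))) +
  π * x0 / (sig x0 L * Real.tan (sig x0 L))

/-- first component of `X = φ N + φ_τ γ̇`, where `N = γ̇^⊥ = (ẏ, −ẋ)` -/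
noncomputable def Xone (x0 L : ℝ) (φ φτ : ℝ → ℝ) (s : ℝ) : ℝ :=
  φ s * deriv (yc x0 L) s + φτ s * deriv (xc x0 L) s

/-- second component of `X = φ N + φ_τ γ̇` -/
noncomputable def Xtwo (x0 L : ℝ) (φ φτ : ℝ → ℝ) (s : ℝ) : ℝ :=
  -φ s * deriv (xc x0 L) s + φτ s * deriv (yc x0 L) s

/-- `F(t) = ∫₀^{2L} |γ̇_t|⁴/⟨γ̇_t, γ̈_t^⊥⟩ ds`, the total inverse curvature of `γ_t = γ + tX` -/
noncomputable def Fvar (x0 L : ℝ) (φ φτ : ℝ → ℝ) (t : ℝ) : ℝ :=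
  ∫ s in (0:ℝ)..(2 * L),
    ((deriv (xc x0 L) s + t * deriv (Xone x0 L φ φτ) s) ^ 2 +
        (deriv (yc x0 L) s + t * deriv (Xtwo x0 L φ φτ) s) ^ 2) ^ 2 /
      ((deriv (xc x0 L) s + t * deriv (Xone x0 L φ φτ) s) *
          (deriv (deriv (yc x0 L)) s + t * deriv (deriv (Xtwo x0 L φ φτ)) s) -
        (deriv (yc x0 L) s + t * deriv (Xtwo x0 L φ φτ) s) *
          (deriv (deriv (xc x0 L)) s + t * deriv (deriv (Xone x0 L φ φτ)) s))

/-!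
Write the variation in the moving frame of `γ`. The integrand `|γ̇_t|⁴ / ⟨γ̇_t, γ̈_t^⊥⟩` is
invariant under rotations, so in this frame it is an explicit quotient of polynomials in `t` whose
coefficients are the components of the derivatives of `φ N + φ_τ γ̇`; differentiating it twice under
the integral sign gives the second variation in terms of these components. The curvature of the
critical curve satisfies `Ḣ = c (s - L) H³` with `c = x₀ / (L + x₀)`, and integrating by parts with
this equation produces the stated form, the multiplier being `λ = 2 - 2c`.
-/

open scoped Topology

section LineVariation

variable {E F : Type*} [NormedAddCommGroup E] [NormedSpace ℝ E] [NormedAddCommGroup F]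
  [NormedSpace ℝ F] {Φ : E → F} {Ω : Set E} {v w : ℝ → E} {a b t₀ : ℝ}

lemma eventually_forall_add_smul_mem (hΩ : IsOpen Ω) (hv : ContinuousOn v (uIcc a b))
    (hw : ContinuousOn w (uIcc a b)) (hmem : ∀ s ∈ uIcc a b, v s + t₀ • w s ∈ Ω) :
    ∀ᶠ t in 𝓝 t₀, ∀ s ∈ uIcc a b, v s + t • w s ∈ Ω := by
  -- The compact set is the image of `(v, w)`: this turns `ContinuousOn` into global continuity.
  have hcompact : IsCompact ((fun s ↦ (v s, w s)) '' uIcc a b) :=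
    isCompact_uIcc.image_of_continuousOn (hv.prodMk hw)
  have hopen : IsOpen {z : ℝ × E × E | z.2.1 + z.1 • z.2.2 ∈ Ω} := hΩ.preimage (by fun_prop)
  have := hcompact.eventually_forall_of_forall_eventually (x₀ := t₀)
    (P := fun t p ↦ p.1 + t • p.2 ∈ Ω)
    (by rintro _ ⟨s, hs, rfl⟩; exact hopen.mem_nhds (hmem s hs))
  filter_upwards [this] with t ht s hs using ht _ (mem_image_of_mem _ hs)

lemma hasDerivAt_comp_add_smul {x y : E} (hΩ : IsOpen Ω) (hΦ : ContDiffOn ℝ 1 Φ Ω)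
    (hmem : x + t₀ • y ∈ Ω) :
    HasDerivAt (fun t : ℝ ↦ Φ (x + t • y)) (fderiv ℝ Φ (x + t₀ • y) y) t₀ := by
  have hΦd : DifferentiableAt ℝ Φ (x + t₀ • y) :=
    (hΦ.differentiableOn one_ne_zero).differentiableAt (hΩ.mem_nhds hmem)
  have hline : HasDerivAt (fun t : ℝ ↦ x + t • y) y t₀ := by
    simpa using ((hasDerivAt_id t₀).smul_const y).const_add x
  exact hΦd.hasFDerivAt.comp_hasDerivAt t₀ hline

lemma hasDerivAt_intervalIntegral_comp_add_smul (hΩ : IsOpen Ω) (hΦ : ContDiffOn ℝ 1 Φ Ω)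
    (hv : ContinuousOn v (uIcc a b)) (hw : ContinuousOn w (uIcc a b))
    (hmem : ∀ s ∈ uIcc a b, v s + t₀ • w s ∈ Ω) :
    HasDerivAt (fun t ↦ ∫ s in a..b, Φ (v s + t • w s))
      (∫ s in a..b, fderiv ℝ Φ (v s + t₀ • w s) (w s)) t₀ := by
  obtain ⟨ε, hε, hball⟩ := Metric.nhds_basis_closedBall.eventually_iff.1
    (eventually_forall_add_smul_mem hΩ hv hw hmem)
  have ht₀ : t₀ ∈ Metric.closedBall t₀ ε := Metric.mem_closedBall_self hε.le
  have hderiv_cont : ContinuousOn (fun p : ℝ × ℝ ↦ fderiv ℝ Φ (v p.2 + p.1 • w p.2) (w p.2))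
      (Metric.closedBall t₀ ε ×ˢ uIcc a b) := by
    have hv' := hv.comp continuousOn_snd (mapsTo_snd_prod (s := Metric.closedBall t₀ ε))
    have hw' := hw.comp continuousOn_snd (mapsTo_snd_prod (s := Metric.closedBall t₀ ε))
    refine ((hΦ.continuousOn_fderiv_of_isOpen hΩ le_rfl).comp
      (hv'.add (continuousOn_fst.smul hw')) ?_).clm_apply hw'
    exact fun p hp ↦ hball hp.1 p.2 hp.2
  obtain ⟨M, hM⟩ :=
    ((isCompact_closedBall t₀ ε).prod isCompact_uIcc).exists_bound_of_continuousOn hderiv_cont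
  have hint (t : ℝ) (ht : t ∈ Metric.closedBall t₀ ε) :
      IntervalIntegrable (fun s ↦ Φ (v s + t • w s)) MeasureTheory.volume a b :=
    (hΦ.continuousOn.comp (hv.add (hw.const_smul t)) (hball ht)).intervalIntegrable
  have hint' : IntervalIntegrable (fun s ↦ fderiv ℝ Φ (v s + t₀ • w s) (w s))
      MeasureTheory.volume a b :=
    (hderiv_cont.comp (f := fun s ↦ (t₀, s)) (by fun_prop)
      (fun s hs ↦ ⟨ht₀, hs⟩)).intervalIntegrable
  refine (intervalIntegral.hasDerivAt_integral_of_dominated_loc_of_deriv_le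
    (F' := fun t s ↦ fderiv ℝ Φ (v s + t • w s) (w s)) (bound := fun _ ↦ M)
    (Metric.closedBall_mem_nhds t₀ hε) ?_ (hint t₀ ht₀) hint'.def'.aestronglyMeasurable
    ?_ intervalIntegrable_const ?_).2
  · filter_upwards [Metric.closedBall_mem_nhds t₀ hε] with t ht
      using (hint t ht).def'.aestronglyMeasurable
  · exact .of_forall fun s hs t ht ↦ hM (t, s) ⟨ht, uIoc_subset_uIcc hs⟩
  · exact .of_forall fun s hs t ht ↦
      hasDerivAt_comp_add_smul hΩ hΦ (hball ht s (uIoc_subset_uIcc hs))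

lemma exists_deriv_hasDerivAt_intervalIntegral_comp_add_smul (hΩ : IsOpen Ω)
    (hΦ : ContDiffOn ℝ 2 Φ Ω) (hv : ContinuousOn v (uIcc a b)) (hw : ContinuousOn w (uIcc a b))
    (hmem : ∀ s ∈ uIcc a b, v s ∈ Ω) :
    ∃ I' : ℝ → F,
      (∀ᶠ t in 𝓝 0, HasDerivAt (fun t ↦ ∫ s in a..b, Φ (v s + t • w s)) (I' t) t) ∧
      HasDerivAt I' (∫ s in a..b, deriv (deriv fun t : ℝ ↦ Φ (v s + t • w s)) 0) 0 := by
  have hΦ₁ : ContDiffOn ℝ 1 Φ Ω := hΦ.of_le one_le_two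
  have hmem₀ : ∀ s ∈ uIcc a b, v s + (0 : ℝ) • w s ∈ Ω := by simpa using hmem
  have hline := eventually_forall_add_smul_mem hΩ hv hw hmem₀
  refine ⟨fun t ↦ ∫ s in a..b, fderiv ℝ Φ (v s + t • w s) (w s), ?_, ?_⟩
  · filter_upwards [hline] with t ht
      using hasDerivAt_intervalIntegral_comp_add_smul hΩ hΦ₁ hv hw ht
  -- The first derivative is again an integral along lines, those of direction `(w, 0)` in `E × E`.
  let Ψ : E × E → F := fun z ↦ fderiv ℝ Φ z.1 z.2
  have hΩ' : IsOpen (Ω ×ˢ (univ : Set E)) := hΩ.prod isOpen_univ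
  have hΨ : ContDiffOn ℝ 1 Ψ (Ω ×ˢ univ) :=
    ((hΦ.fderiv_of_isOpen hΩ (by norm_num)).comp contDiffOn_fst fun z hz ↦ hz.1).clm_apply
      contDiffOn_snd
  have hderiv (s : ℝ) (hs : s ∈ uIcc a b) :
      deriv (deriv fun t : ℝ ↦ Φ (v s + t • w s)) 0 =
        fderiv ℝ Ψ ((v s, w s) + (0 : ℝ) • (w s, 0)) (w s, 0) := by
    have hfirst : deriv (fun t : ℝ ↦ Φ (v s + t • w s)) =ᶠ[𝓝 0]
        fun t ↦ Ψ ((v s, w s) + t • (w s, 0)) := by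
      filter_upwards [hline] with t ht
      simpa [Ψ] using (hasDerivAt_comp_add_smul hΩ hΦ₁ (ht s hs)).deriv
    rw [hfirst.deriv_eq]
    exact (hasDerivAt_comp_add_smul hΩ' hΨ (by simpa using hmem s hs)).deriv
  rw [intervalIntegral.integral_congr hderiv]
  simpa [Ψ] using hasDerivAt_intervalIntegral_comp_add_smul hΩ' hΨ (hv.prodMk hw)
    (w := fun s ↦ (w s, 0))
    (hw.prodMk continuousOn_const) (t₀ := 0) (by simpa using hmem)

end LineVariation

lemma deriv_deriv_fun_div {f g f' g' : ℝ → ℝ} {f'' g'' t₀ : ℝ}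
    (hf : ∀ t, HasDerivAt f (f' t) t) (hf' : HasDerivAt f' f'' t₀)
    (hg : ∀ t, HasDerivAt g (g' t) t) (hg' : HasDerivAt g' g'' t₀) (hg₀ : g t₀ ≠ 0) :
    deriv (deriv fun t ↦ f t / g t) t₀ =
      f'' / g t₀ - (2 * f' t₀ * g' t₀ + f t₀ * g'') / g t₀ ^ 2
        + 2 * f t₀ * g' t₀ ^ 2 / g t₀ ^ 3 := by
  have hfirst : deriv (fun t ↦ f t / g t) =ᶠ[𝓝 t₀]
      fun t ↦ (f' t * g t - f t * g' t) / g t ^ 2 := by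
    filter_upwards [(hg t₀).continuousAt.eventually_ne hg₀] with t ht
      using ((hf t).div (hg t) ht).deriv
  rw [hfirst.deriv_eq]
  refine (((hf'.fun_mul (hg t₀)).fun_sub ((hf t₀).fun_mul hg')).fun_div
    ((hg t₀).fun_pow 2) (pow_ne_zero 2 hg₀)).deriv.trans ?_
  field_simp
  ring

/-- The normal component `ḟ - H g` of the derivative of the field `f N + g T` along a curve of
curvature `H` with unit tangent `T` and normal `N = T^⊥`. -/
noncomputable def normalRate (H f g : ℝ → ℝ) (s : ℝ) : ℝ := deriv f s - H s * g s

/-- The tangential component `ġ + H f` of the derivative of the field `f N + g T`, where `T` and `N`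
are as in `normalRate`. -/
noncomputable def tangentRate (H f g : ℝ → ℝ) (s : ℝ) : ℝ := deriv g s + H s * f s

/-- The first coordinate of the field `f N + g T`, where `T = (cos θ, sin θ)` and
`N = T^⊥ = (sin θ, -cos θ)`. -/
noncomputable def frameX (θ f g : ℝ → ℝ) (s : ℝ) : ℝ := f s * sin (θ s) + g s * cos (θ s)

/-- The second coordinate of the field `f N + g T` of `frameX`. -/
noncomputable def frameY (θ f g : ℝ → ℝ) (s : ℝ) : ℝ := -f s * cos (θ s) + g s * sin (θ s)

section MovingFrame

variable {θ H f g : ℝ → ℝ} {U : Set ℝ} {s : ℝ}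

lemma hasDerivAt_frameX (hθ : HasDerivAt θ (H s) s) (hf : DifferentiableAt ℝ f s)
    (hg : DifferentiableAt ℝ g s) :
    HasDerivAt (frameX θ f g) (frameX θ (normalRate H f g) (tangentRate H f g) s) s := by
  refine ((hf.hasDerivAt.fun_mul hθ.sin).fun_add (hg.hasDerivAt.fun_mul hθ.cos)).congr_deriv ?_
  simp only [frameX, normalRate, tangentRate]
  ring

lemma hasDerivAt_frameY (hθ : HasDerivAt θ (H s) s) (hf : DifferentiableAt ℝ f s)
    (hg : DifferentiableAt ℝ g s) :
    HasDerivAt (frameY θ f g) (frameY θ (normalRate H f g) (tangentRate H f g) s) s := by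
  refine ((hf.hasDerivAt.fun_neg.fun_mul hθ.cos).fun_add
    (hg.hasDerivAt.fun_mul hθ.sin)).congr_deriv ?_
  simp only [frameY, normalRate, tangentRate]
  ring

lemma contDiffOn_normalRate {m n : WithTop ℕ∞} (hU : IsOpen U) (hH : ContDiffOn ℝ m H U)
    (hf : ContDiffOn ℝ n f U) (hg : ContDiffOn ℝ n g U) (hmn : m + 1 ≤ n) :
    ContDiffOn ℝ m (normalRate H f g) U :=
  (hf.deriv_of_isOpen hU hmn).sub (hH.mul (hg.of_le (le_self_add.trans hmn)))

lemma contDiffOn_tangentRate {m n : WithTop ℕ∞} (hU : IsOpen U) (hH : ContDiffOn ℝ m H U)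
    (hf : ContDiffOn ℝ n f U) (hg : ContDiffOn ℝ n g U) (hmn : m + 1 ≤ n) :
    ContDiffOn ℝ m (tangentRate H f g) U :=
  (hg.deriv_of_isOpen hU hmn).add (hH.mul (hf.of_le (le_self_add.trans hmn)))

lemma eqOn_deriv_frameX (hU : IsOpen U) (hθ : ∀ s ∈ U, HasDerivAt θ (H s) s)
    (hf : ContDiffOn ℝ 1 f U) (hg : ContDiffOn ℝ 1 g U) :
    EqOn (deriv (frameX θ f g)) (frameX θ (normalRate H f g) (tangentRate H f g)) U :=
  fun s hs ↦ (hasDerivAt_frameX (hθ s hs)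
    ((hf.differentiableOn one_ne_zero).differentiableAt (hU.mem_nhds hs))
    ((hg.differentiableOn one_ne_zero).differentiableAt (hU.mem_nhds hs))).deriv

lemma eqOn_deriv_frameY (hU : IsOpen U) (hθ : ∀ s ∈ U, HasDerivAt θ (H s) s)
    (hf : ContDiffOn ℝ 1 f U) (hg : ContDiffOn ℝ 1 g U) :
    EqOn (deriv (frameY θ f g)) (frameY θ (normalRate H f g) (tangentRate H f g)) U :=
  fun s hs ↦ (hasDerivAt_frameY (hθ s hs)
    ((hf.differentiableOn one_ne_zero).differentiableAt (hU.mem_nhds hs))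
    ((hg.differentiableOn one_ne_zero).differentiableAt (hU.mem_nhds hs))).deriv

end MovingFrame

/-- `|p|⁴ / ⟨p, q^⊥⟩`, the integrand of the total inverse curvature, at a pair `(p, q)` of a
velocity `p` and an acceleration `q`. -/
noncomputable def inverseCurvatureDensity (z : (ℝ × ℝ) × ℝ × ℝ) : ℝ :=
  (z.1.1 ^ 2 + z.1.2 ^ 2) ^ 2 / (z.1.1 * z.2.2 - z.1.2 * z.2.1)

section Density

lemma isOpen_setOf_cross_ne_zero :
    IsOpen {z : (ℝ × ℝ) × ℝ × ℝ | z.1.1 * z.2.2 - z.1.2 * z.2.1 ≠ 0} :=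
  isOpen_ne_fun (by fun_prop) (by fun_prop)

lemma contDiffOn_inverseCurvatureDensity {n : WithTop ℕ∞} :
    ContDiffOn ℝ n inverseCurvatureDensity {z | z.1.1 * z.2.2 - z.1.2 * z.2.1 ≠ 0} :=
  ContDiffOn.div (by fun_prop) (by fun_prop) fun _ hz ↦ hz

lemma inverseCurvatureDensity_rotate (α : ℝ) (z : (ℝ × ℝ) × ℝ × ℝ) :
    inverseCurvatureDensity
        ((z.1.1 * sin α + z.1.2 * cos α, -z.1.1 * cos α + z.1.2 * sin α),
          (z.2.1 * sin α + z.2.2 * cos α, -z.2.1 * cos α + z.2.2 * sin α)) =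
      inverseCurvatureDensity z := by
  have hsq := sin_sq_add_cos_sq α
  unfold inverseCurvatureDensity
  congr 1
  · linear_combination (z.1.1 ^ 2 + z.1.2 ^ 2) ^ 2 * (sin α ^ 2 + cos α ^ 2 + 1) * hsq
  · linear_combination (z.1.1 * z.2.2 - z.1.2 * z.2.1) * hsq

open Polynomial in
lemma deriv_deriv_inverseCurvatureDensity {h : ℝ} (hh : h ≠ 0) (a b a' b' : ℝ) :
    deriv (deriv fun t : ℝ ↦ inverseCurvatureDensity
        (((0, 1), (-h, 0)) + t • ((a, b), (a' - h * b, b' + h * a)))) 0 =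
      2 * (a ^ 2 + b ^ 2) / h + 2 * (a' * b - a * b') / h ^ 2 + 2 * a' ^ 2 / h ^ 3 := by
  let p : ℝ[X] := ((C a * X) ^ 2 + (1 + C b * X) ^ 2) ^ 2
  let q : ℝ[X] := C a * X * (C (b' + h * a) * X) - (1 + C b * X) * (C (-h) + C (a' - h * b) * X)
  have hratio (t : ℝ) : inverseCurvatureDensity
      (((0, 1), (-h, 0)) + t • ((a, b), (a' - h * b, b' + h * a))) = p.eval t / q.eval t := by
    simp [inverseCurvatureDensity, p, q, mul_comm t]
  have hp₀ : p.eval 0 = 1 := by simp [p]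
  have hq₀ : q.eval 0 = h := by simp [q]
  have hp₁ : p.derivative.eval 0 = 4 * b := by simp [p, derivative_pow]; ring
  have hq₁ : q.derivative.eval 0 = 2 * h * b - a' := by simp [q]; ring
  have hp₂ : p.derivative.derivative.eval 0 = 4 * a ^ 2 + 12 * b ^ 2 := by
    simp [p, derivative_pow]; ring
  have hq₂ : q.derivative.derivative.eval 0 = 2 * (a * (b' + h * a) - b * (a' - h * b)) := by
    simp [q]; ring
  simp only [hratio]
  rw [deriv_deriv_fun_div p.hasDerivAt (p.derivative.hasDerivAt 0) q.hasDerivAt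
    (q.derivative.hasDerivAt 0) (hq₀ ▸ hh), hp₀, hp₁, hp₂, hq₀, hq₁, hq₂]
  field_simp
  ring

end Density

/-- The total inverse curvature `∫ |γ̇_t|⁴ / ⟨γ̇_t, γ̈_t^⊥⟩ ds` on `[a, b]` of the curve
`γ_t = (x + t X, y + t Y)`. -/
noncomputable def totalInverseCurvature (x y X Y : ℝ → ℝ) (a b t : ℝ) : ℝ :=
  ∫ s in a..b, inverseCurvatureDensity
    ((deriv x s + t * deriv X s, deriv y s + t * deriv Y s),
      (deriv (deriv x) s + t * deriv (deriv X) s, deriv (deriv y) s + t * deriv (deriv Y) s))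

/-- `(x, y)` is parametrized by arc length on `U`, with tangent angle `θ` and curvature `H`. -/
structure IsArcLengthCurveOn (x y θ H : ℝ → ℝ) (U : Set ℝ) : Prop where
  hasDerivAt_fst : ∀ s ∈ U, HasDerivAt x (cos (θ s)) s
  hasDerivAt_snd : ∀ s ∈ U, HasDerivAt y (sin (θ s)) s
  hasDerivAt_angle : ∀ s ∈ U, HasDerivAt θ (H s) s

/-- The integrand of the second variation of the total inverse curvature in the direction
`φ N + ψ T`, in terms of the components of the derivative of this field in the moving frame. -/
noncomputable def secondVariationDensity (H φ ψ : ℝ → ℝ) (s : ℝ) : ℝ :=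
  2 * (normalRate H φ ψ s ^ 2 + tangentRate H φ ψ s ^ 2) / H s +
    2 * (deriv (normalRate H φ ψ) s * tangentRate H φ ψ s -
      normalRate H φ ψ s * deriv (tangentRate H φ ψ) s) / H s ^ 2 +
    2 * deriv (normalRate H φ ψ) s ^ 2 / H s ^ 3

section SecondVariation

variable {x y θ H φ ψ : ℝ → ℝ} {U : Set ℝ} {a b : ℝ}

namespace IsArcLengthCurveOn

lemma eqOn_deriv_fst (hγ : IsArcLengthCurveOn x y θ H U) : EqOn (deriv x) (frameX θ 0 1) U :=
  fun s hs ↦ by simp [frameX, (hγ.hasDerivAt_fst s hs).deriv]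

lemma eqOn_deriv_snd (hγ : IsArcLengthCurveOn x y θ H U) : EqOn (deriv y) (frameY θ 0 1) U :=
  fun s hs ↦ by simp [frameY, (hγ.hasDerivAt_snd s hs).deriv]

lemma eqOn_variation_fst (hγ : IsArcLengthCurveOn x y θ H U) :
    EqOn (fun s ↦ φ s * deriv y s + ψ s * deriv x s) (frameX θ φ ψ) U :=
  fun s hs ↦ by
    simp only [frameX, (hγ.hasDerivAt_fst s hs).deriv, (hγ.hasDerivAt_snd s hs).deriv]

lemma eqOn_variation_snd (hγ : IsArcLengthCurveOn x y θ H U) :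
    EqOn (fun s ↦ -φ s * deriv x s + ψ s * deriv y s) (frameY θ φ ψ) U :=
  fun s hs ↦ by
    simp only [frameY, (hγ.hasDerivAt_fst s hs).deriv, (hγ.hasDerivAt_snd s hs).deriv]

/-- In the moving frame the velocity is `(0, 1)` and the acceleration is `(-H, 0)`. -/
lemma totalInverseCurvature_eq (hγ : IsArcLengthCurveOn x y θ H U) (hU : IsOpen U)
    (hab : uIcc a b ⊆ U) (hH : ContDiffOn ℝ 1 H U) (hφ : ContDiffOn ℝ 2 φ U)
    (hψ : ContDiffOn ℝ 2 ψ U) (t : ℝ) :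
    totalInverseCurvature x y (fun s ↦ φ s * deriv y s + ψ s * deriv x s)
        (fun s ↦ -φ s * deriv x s + ψ s * deriv y s) a b t =
      ∫ s in a..b, inverseCurvatureDensity (((0, 1), (-H s, 0)) +
        t • ((normalRate H φ ψ s, tangentRate H φ ψ s),
          (normalRate H (normalRate H φ ψ) (tangentRate H φ ψ) s,
            tangentRate H (normalRate H φ ψ) (tangentRate H φ ψ) s))) := by
  have hθ := hγ.hasDerivAt_angle
  have hn := contDiffOn_normalRate hU hH hφ hψ (by norm_num)
  have ht := contDiffOn_tangentRate hU hH hφ hψ (by norm_num)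
  have hφ₁ : ContDiffOn ℝ 1 φ U := hφ.of_le one_le_two
  have hψ₁ : ContDiffOn ℝ 1 ψ U := hψ.of_le one_le_two
  have hc₀ : ContDiffOn ℝ 1 (0 : ℝ → ℝ) U := contDiffOn_const
  have hc₁ : ContDiffOn ℝ 1 (1 : ℝ → ℝ) U := contDiffOn_const
  have hX := (hγ.eqOn_variation_fst.deriv hU).trans (eqOn_deriv_frameX hU hθ hφ₁ hψ₁)
  have hY := (hγ.eqOn_variation_snd.deriv hU).trans (eqOn_deriv_frameY hU hθ hφ₁ hψ₁)
  refine intervalIntegral.integral_congr fun s hs ↦ ?_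
  have hsU := hab hs
  refine Eq.trans ?_ (inverseCurvatureDensity_rotate (θ s) _)
  rw [hγ.eqOn_deriv_fst hsU, hγ.eqOn_deriv_snd hsU,
    (hγ.eqOn_deriv_fst.deriv hU).trans (eqOn_deriv_frameX hU hθ hc₀ hc₁) hsU,
    (hγ.eqOn_deriv_snd.deriv hU).trans (eqOn_deriv_frameY hU hθ hc₀ hc₁) hsU,
    hX hsU, hY hsU, (hX.deriv hU).trans (eqOn_deriv_frameX hU hθ hn ht) hsU,
    (hY.deriv hU).trans (eqOn_deriv_frameY hU hθ hn ht) hsU]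
  congr 1
  ext <;> simp [frameX, frameY, normalRate, tangentRate] <;> ring

theorem exists_hasDerivAt_totalInverseCurvature (hγ : IsArcLengthCurveOn x y θ H U)
    (hU : IsOpen U) (hab : uIcc a b ⊆ U) (hH : ContDiffOn ℝ 1 H U)
    (hH₀ : ∀ s ∈ uIcc a b, H s ≠ 0) (hφ : ContDiffOn ℝ 2 φ U) (hψ : ContDiffOn ℝ 2 ψ U) :
    ∃ F' : ℝ → ℝ,
      (∀ᶠ t in 𝓝 0, HasDerivAt
        (totalInverseCurvature x y (fun s ↦ φ s * deriv y s + ψ s * deriv x s)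
          (fun s ↦ -φ s * deriv x s + ψ s * deriv y s) a b) (F' t) t) ∧
      HasDerivAt F' (∫ s in a..b, secondVariationDensity H φ ψ s) 0 := by
  have hn := contDiffOn_normalRate hU hH hφ hψ (by norm_num)
  have ht := contDiffOn_tangentRate hU hH hφ hψ (by norm_num)
  have hH₁ : ContDiffOn ℝ 0 H U := hH.of_le zero_le_one
  have hcont : ContinuousOn (fun s ↦ ((normalRate H φ ψ s, tangentRate H φ ψ s),
      (normalRate H (normalRate H φ ψ) (tangentRate H φ ψ) s,
        tangentRate H (normalRate H φ ψ) (tangentRate H φ ψ) s))) (uIcc a b) :=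
    ((hn.continuousOn.prodMk ht.continuousOn).prodMk
      ((contDiffOn_normalRate hU hH₁ hn ht (by norm_num)).continuousOn.prodMk
        (contDiffOn_tangentRate hU hH₁ hn ht (by norm_num)).continuousOn)).mono hab
  obtain ⟨F', hF', hF''⟩ := exists_deriv_hasDerivAt_intervalIntegral_comp_add_smul
    isOpen_setOf_cross_ne_zero contDiffOn_inverseCurvatureDensity
    (v := fun s ↦ ((0, 1), (-H s, 0)))
    (continuousOn_const.prodMk ((hH.continuousOn.mono hab).neg.prodMk continuousOn_const)) hcont
    (by simpa using hH₀)
  refine ⟨F', ?_, hF''.congr_deriv ?_⟩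
  · simpa only [funext (hγ.totalInverseCurvature_eq hU hab hH hφ hψ)] using hF'
  · exact intervalIntegral.integral_congr fun s hs ↦
      deriv_deriv_inverseCurvatureDensity (hH₀ s hs) _ _ _ _

end IsArcLengthCurveOn

end SecondVariation

/-- The boundary term of the integration by parts that brings the second variation into its final
form, when the curvature satisfies `Ḣ = c (s - m) H³`. -/
noncomputable def boundaryTerm (c m : ℝ) (H φ ψ : ℝ → ℝ) (s : ℝ) : ℝ :=
  2 * (φ s * deriv φ s + ψ s * deriv ψ s) / H s - 2 * deriv φ s * deriv ψ s / H s ^ 2 +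
    2 * c * (s - m) * (H s * ψ s ^ 2 - 2 * deriv φ s * ψ s) - (2 - 4 * c) * (φ s * ψ s)

section CubicCurvature

variable {H φ ψ : ℝ → ℝ} {U : Set ℝ} {a b c m s : ℝ}

lemma contDiffOn_one_of_hasDerivAt_cubic (hU : IsOpen U)
    (hH : ∀ s ∈ U, HasDerivAt H (c * (s - m) * H s ^ 3) s) : ContDiffOn ℝ 1 H U := by
  have hcont : ContinuousOn H U := fun s hs ↦ (hH s hs).continuousAt.continuousWithinAt
  rw [← zero_add 1, contDiffOn_succ_iff_deriv_of_isOpen hU, contDiffOn_zero]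
  refine ⟨fun s hs ↦ (hH s hs).differentiableAt.differentiableWithinAt, by simp, ?_⟩
  have hderiv_cont : ContinuousOn (fun s ↦ c * (s - m) * H s ^ 3) U := by fun_prop
  exact hderiv_cont.congr fun s hs ↦ (hH s hs).deriv

lemma hasDerivAt_boundaryTerm (hH : HasDerivAt H (c * (s - m) * H s ^ 3) s) (hH₀ : H s ≠ 0)
    (hφ : ContDiffAt ℝ 2 φ s) (hψ : ContDiffAt ℝ 2 ψ s) :
    HasDerivAt (boundaryTerm c m H φ ψ)
      (secondVariationDensity H φ ψ s -
        ((2 * H s * φ s ^ 2 - 2 * deriv φ s ^ 2 / H s + 2 * deriv (deriv φ) s ^ 2 / H s ^ 3) +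
          (2 - 2 * c) * (H s * ψ s ^ 2 + 2 * φ s * deriv ψ s))) s := by
  have dφ := (hφ.differentiableAt two_ne_zero).hasDerivAt
  have dψ := (hψ.differentiableAt two_ne_zero).hasDerivAt
  have ddφ := ((hφ.derivWithin le_rfl).differentiableAt one_ne_zero).hasDerivAt
  have ddψ := ((hψ.derivWithin le_rfl).differentiableAt one_ne_zero).hasDerivAt
  have hnormal : deriv (normalRate H φ ψ) s =
      deriv (deriv φ) s - (c * (s - m) * H s ^ 3 * ψ s + H s * deriv ψ s) :=
    (ddφ.sub (hH.mul dψ)).deriv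
  have htangent : deriv (tangentRate H φ ψ) s =
      deriv (deriv ψ) s + (c * (s - m) * H s ^ 3 * φ s + H s * deriv φ s) :=
    (ddψ.add (hH.mul dφ)).deriv
  have dshift : HasDerivAt (fun s ↦ 2 * c * (s - m)) (2 * c) s := by
    simpa using ((hasDerivAt_id s).sub_const m).const_mul (2 * c)
  have hproducts := (((dφ.fun_mul ddφ).fun_add (dψ.fun_mul ddψ)).const_mul 2).fun_div hH hH₀
  have hmixed := ((ddφ.const_mul 2).fun_mul ddψ).fun_div (hH.fun_pow 2) (pow_ne_zero 2 hH₀)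
  have hshifted := dshift.fun_mul ((hH.fun_mul (dψ.fun_pow 2)).fun_sub
    ((ddφ.const_mul 2).fun_mul dψ))
  refine (((hproducts.fun_sub hmixed).fun_add hshifted).fun_sub
    ((dφ.fun_mul dψ).const_mul (2 - 4 * c))).congr_deriv ?_
  simp only [secondVariationDensity, hnormal, htangent, normalRate, tangentRate]
  field_simp
  ring

lemma continuousOn_secondVariationDensity (hU : IsOpen U) (hH : ContDiffOn ℝ 1 H U)
    (hH₀ : ∀ s ∈ U, H s ≠ 0) (hφ : ContDiffOn ℝ 2 φ U) (hψ : ContDiffOn ℝ 2 ψ U) :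
    ContinuousOn (secondVariationDensity H φ ψ) U := by
  have hn := contDiffOn_normalRate hU hH hφ hψ (by norm_num)
  have ht := contDiffOn_tangentRate hU hH hφ hψ (by norm_num)
  have hn₀ := hn.continuousOn
  have ht₀ := ht.continuousOn
  have hn₁ := hn.continuousOn_deriv_of_isOpen hU le_rfl
  have ht₁ := ht.continuousOn_deriv_of_isOpen hU le_rfl
  have hHc := hH.continuousOn
  unfold secondVariationDensity
  fun_prop (disch := first | assumption | simpa using hH₀)

lemma integral_secondVariationDensity (hU : IsOpen U) (hab : uIcc a b ⊆ U)
    (hH : ∀ s ∈ U, HasDerivAt H (c * (s - m) * H s ^ 3) s) (hH₀ : ∀ s ∈ U, H s ≠ 0)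
    (hφ : ContDiffOn ℝ 2 φ U) (hψ : ContDiffOn ℝ 2 ψ U)
    (hφa : φ a = 0) (hφb : φ b = 0) (hψa : ψ a = 0) (hψb : ψ b = 0) :
    ∫ s in a..b, secondVariationDensity H φ ψ s =
      (∫ s in a..b, (2 * H s * φ s ^ 2 - 2 * deriv φ s ^ 2 / H s +
          2 * deriv (deriv φ) s ^ 2 / H s ^ 3)) +
        (2 - 2 * c) * (∫ s in a..b, (H s * ψ s ^ 2 + 2 * φ s * deriv ψ s)) -
        (2 * deriv φ b * deriv ψ b / H b ^ 2 - 2 * deriv φ a * deriv ψ a / H a ^ 2) := by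
  have hφ₁ := hφ.deriv_of_isOpen hU (m := 1) (by norm_num)
  have hψ₁ := hψ.deriv_of_isOpen hU (m := 1) (by norm_num)
  have hH₁ := contDiffOn_one_of_hasDerivAt_cubic hU hH
  have cφ := hφ.continuousOn
  have cψ := hψ.continuousOn
  have cφ₁ := hφ₁.continuousOn
  have cψ₁ := hψ₁.continuousOn
  have cφ₂ := hφ₁.continuousOn_deriv_of_isOpen hU le_rfl
  have cH := hH₁.continuousOn
  have hdensity := ((continuousOn_secondVariationDensity hU hH₁ hH₀ hφ hψ).mono
    hab).intervalIntegrable (μ := MeasureTheory.volume)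
  have hnormal : IntervalIntegrable (fun s ↦ 2 * H s * φ s ^ 2 - 2 * deriv φ s ^ 2 / H s +
      2 * deriv (deriv φ) s ^ 2 / H s ^ 3) MeasureTheory.volume a b := by
    refine (ContinuousOn.mono ?_ hab).intervalIntegrable
    fun_prop (disch := simpa using hH₀)
  have htangent : IntervalIntegrable (fun s ↦ (2 - 2 * c) * (H s * ψ s ^ 2 + 2 * φ s * deriv ψ s))
      MeasureTheory.volume a b := by
    refine (ContinuousOn.mono ?_ hab).intervalIntegrable
    fun_prop
  have hparts := intervalIntegral.integral_eq_sub_of_hasDerivAt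
    (fun s hs ↦ hasDerivAt_boundaryTerm (hH s (hab hs)) (hH₀ s (hab hs))
      (hφ.contDiffAt (hU.mem_nhds (hab hs))) (hψ.contDiffAt (hU.mem_nhds (hab hs))))
    (hdensity.sub (hnormal.add htangent))
  rw [intervalIntegral.integral_sub hdensity (hnormal.add htangent),
    intervalIntegral.integral_add hnormal htangent, intervalIntegral.integral_const_mul] at hparts
  simp only [boundaryTerm, hφa, hφb, hψa, hψb] at hparts
  linear_combination hparts

end CubicCurvature

section ArcsinRescaled

variable {m k s : ℝ}

lemma sq_sub_sq_pos_of_mem_Ioo (hs : s ∈ Ioo (m - k) (m + k)) : 0 < k ^ 2 - (s - m) ^ 2 :=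
  sub_pos.2 (sq_lt_sq' (by linarith [hs.1]) (by linarith [hs.2]))

lemma sqrt_one_sub_div_sq (hk : 0 < k) :
    √(1 - ((s - m) / k) ^ 2) = √(k ^ 2 - (s - m) ^ 2) / k := by
  rw [div_pow, one_sub_div (pow_ne_zero 2 hk.ne'), sqrt_div' _ (sq_nonneg k), sqrt_sq hk.le]

lemma hasDerivAt_arcsin_sub_div (hk : 0 < k) (hs : s ∈ Ioo (m - k) (m + k)) :
    HasDerivAt (fun s ↦ arcsin ((s - m) / k)) (1 / √(k ^ 2 - (s - m) ^ 2)) s := by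
  have hneg : (s - m) / k ≠ -1 := by
    rw [Ne, div_eq_iff hk.ne']
    linarith [hs.1]
  have hpos : (s - m) / k ≠ 1 := by
    rw [Ne, div_eq_iff hk.ne']
    linarith [hs.2]
  refine ((hasDerivAt_arcsin hneg hpos).comp s
    (((hasDerivAt_id s).sub_const m).div_const k)).congr_deriv ?_
  have hsqrt := sqrt_pos.2 (sq_sub_sq_pos_of_mem_Ioo hs)
  rw [sqrt_one_sub_div_sq hk]
  field_simp

end ArcsinRescaled

/-- The angle of the velocity of the critical curve with the first axis, so that
`γ̇ = (cos θ, sin θ)`; the shift by `π` accounts for `γ̇(L) = (-1, 0)`. -/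
noncomputable def tangentAngle (x0 L s : ℝ) : ℝ :=
  π + π / sig x0 L * arcsin ((s - L) / kap x0 L)

section CriticalCurve

variable {x0 L s : ℝ}

lemma sig_pos (hx0 : 0 < x0) (hL : 0 < L) : 0 < sig x0 L := by
  unfold sig
  positivity

lemma sig_sq_div_pi_sq (hx0 : 0 < x0) (hL : 0 < L) : sig x0 L ^ 2 / π ^ 2 = x0 / (L + x0) := by
  rw [sig, mul_pow, sq_sqrt (by positivity), mul_div_cancel_left₀ _ (by positivity)]

lemma sig_lt_pi (hx0 : 0 < x0) (hL : 0 < L) : sig x0 L < π := by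
  refine mul_lt_of_lt_one_right pi_pos ((sqrt_lt' one_pos).2 ?_)
  rw [one_pow, div_lt_one (by positivity)]
  exact lt_add_of_pos_left x0 hL

lemma sig_ne_pi_div_two (hx0 : 0 < x0) (hL : 0 < L) (hne : L ≠ 3 * x0) : sig x0 L ≠ π / 2 := by
  intro hsig
  have hquarter := sig_sq_div_pi_sq hx0 hL
  rw [hsig] at hquarter
  field_simp at hquarter
  exact hne (by linarith)

lemma sin_sig_pos (hx0 : 0 < x0) (hL : 0 < L) : 0 < sin (sig x0 L) :=
  sin_pos_of_pos_of_lt_pi (sig_pos hx0 hL) (sig_lt_pi hx0 hL)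

lemma sin_sig_lt_one (hx0 : 0 < x0) (hL : 0 < L) (hne : L ≠ 3 * x0) : sin (sig x0 L) < 1 := by
  refine (sin_le_one _).lt_of_ne fun hsin ↦ sig_ne_pi_div_two hx0 hL hne ?_
  have hσ := sig_pos hx0 hL
  have hσ' := sig_lt_pi hx0 hL
  rw [← cos_pi_div_two_sub, cos_eq_one_iff_of_lt_of_lt (by linarith) (by linarith)] at hsin
  exact (sub_eq_zero.1 hsin).symm

lemma kap_pos (hx0 : 0 < x0) (hL : 0 < L) : 0 < kap x0 L := div_pos hL (sin_sig_pos hx0 hL)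

lemma lt_kap (hx0 : 0 < x0) (hL : 0 < L) (hne : L ≠ 3 * x0) : L < kap x0 L :=
  (lt_div_iff₀ (sin_sig_pos hx0 hL)).2 (mul_lt_of_lt_one_right hL (sin_sig_lt_one hx0 hL hne))

lemma uIcc_subset_Ioo_kap (hx0 : 0 < x0) (hL : 0 < L) (hne : L ≠ 3 * x0) :
    uIcc 0 (2 * L) ⊆ Ioo (L - kap x0 L) (L + kap x0 L) := by
  have hκ := lt_kap hx0 hL hne
  rw [uIcc_of_le (by positivity)]
  exact fun s hs ↦ ⟨by linarith [hs.1], by linarith [hs.2]⟩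

lemma Hc_pos (hx0 : 0 < x0) (hL : 0 < L) (hs : s ∈ Ioo (L - kap x0 L) (L + kap x0 L)) :
    0 < Hc x0 L s :=
  div_pos pi_pos (mul_pos (sig_pos hx0 hL) (sqrt_pos.2 (sq_sub_sq_pos_of_mem_Ioo hs)))

lemma hasDerivAt_Hc (hx0 : 0 < x0) (hL : 0 < L) (hs : s ∈ Ioo (L - kap x0 L) (L + kap x0 L)) :
    HasDerivAt (Hc x0 L) (x0 / (L + x0) * (s - L) * Hc x0 L s ^ 3) s := by
  have hσ := sig_pos hx0 hL
  have hrad := sq_sub_sq_pos_of_mem_Ioo hs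
  have hrad_deriv : HasDerivAt (fun s ↦ kap x0 L ^ 2 - (s - L) ^ 2) (-(2 * (s - L))) s := by
    simpa using (((hasDerivAt_id s).sub_const L).pow 2).const_sub (kap x0 L ^ 2)
  refine ((((hrad_deriv.sqrt hrad.ne').const_mul (sig x0 L)).fun_inv
    (by positivity)).const_mul π).congr_deriv ?_
  rw [← sig_sq_div_pi_sq hx0 hL, Hc]
  field_simp

lemma hasDerivAt_tangentAngle (hx0 : 0 < x0) (hL : 0 < L)
    (hs : s ∈ Ioo (L - kap x0 L) (L + kap x0 L)) :
    HasDerivAt (tangentAngle x0 L) (Hc x0 L s) s := by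
  refine (((hasDerivAt_arcsin_sub_div (kap_pos hx0 hL) hs).const_mul
    (π / sig x0 L)).const_add π).congr_deriv ?_
  rw [Hc, div_mul_div_comm, mul_one]

lemma add_sig_div_sig_mul_arcsin (hx0 : 0 < x0) (hL : 0 < L) :
    (π + sig x0 L) / sig x0 L * arcsin ((s - L) / kap x0 L) =
      tangentAngle x0 L s + arcsin ((s - L) / kap x0 L) - π := by
  rw [add_div, div_self (sig_pos hx0 hL).ne', tangentAngle]
  ring

lemma sub_sig_div_sig_mul_arcsin (hx0 : 0 < x0) (hL : 0 < L) :
    (π - sig x0 L) / sig x0 L * arcsin ((s - L) / kap x0 L) =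
      tangentAngle x0 L s - arcsin ((s - L) / kap x0 L) - π := by
  rw [sub_div, div_self (sig_pos hx0 hL).ne', tangentAngle]
  ring

lemma hasDerivAt_xc (hx0 : 0 < x0) (hL : 0 < L) (hs : s ∈ Ioo (L - kap x0 L) (L + kap x0 L)) :
    HasDerivAt (xc x0 L) (cos (tangentAngle x0 L s)) s := by
  have hσ := sig_pos hx0 hL
  have hσπ : π - sig x0 L ≠ 0 := (sub_pos.2 (sig_lt_pi hx0 hL)).ne'
  have hκ := kap_pos hx0 hL
  have hsqrt := sqrt_pos.2 (sq_sub_sq_pos_of_mem_Ioo hs)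
  have harcsin := hasDerivAt_arcsin_sub_div hκ hs
  refine ((((harcsin.const_mul ((π + sig x0 L) / sig x0 L)).sin.const_mul
      (sig x0 L / (π + sig x0 L))).add
    ((harcsin.const_mul ((π - sig x0 L) / sig x0 L)).sin.const_mul
      (sig x0 L / (π - sig x0 L)))).const_mul (-(kap x0 L / 2))).congr_deriv ?_
  rw [add_sig_div_sig_mul_arcsin hx0 hL, sub_sig_div_sig_mul_arcsin hx0 hL, cos_sub_pi, cos_sub_pi,
    cos_add, cos_sub, cos_arcsin, sqrt_one_sub_div_sq hκ]
  field_simp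
  ring

lemma hasDerivAt_yc (hx0 : 0 < x0) (hL : 0 < L) (hs : s ∈ Ioo (L - kap x0 L) (L + kap x0 L)) :
    HasDerivAt (yc x0 L) (sin (tangentAngle x0 L s)) s := by
  have hσ := sig_pos hx0 hL
  have hσπ : π - sig x0 L ≠ 0 := (sub_pos.2 (sig_lt_pi hx0 hL)).ne'
  have hκ := kap_pos hx0 hL
  have hsqrt := sqrt_pos.2 (sq_sub_sq_pos_of_mem_Ioo hs)
  have harcsin := hasDerivAt_arcsin_sub_div hκ hs
  refine (((((harcsin.const_mul ((π + sig x0 L) / sig x0 L)).cos.const_mul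
      (sig x0 L / (π + sig x0 L))).add
    ((harcsin.const_mul ((π - sig x0 L) / sig x0 L)).cos.const_mul
      (sig x0 L / (π - sig x0 L)))).const_mul (kap x0 L / 2)).add_const _).congr_deriv ?_
  rw [add_sig_div_sig_mul_arcsin hx0 hL, sub_sig_div_sig_mul_arcsin hx0 hL, sin_sub_pi, sin_sub_pi,
    sin_add, sin_sub, cos_arcsin, sqrt_one_sub_div_sq hκ]
  field_simp
  ring

lemma isArcLengthCurveOn_critical (hx0 : 0 < x0) (hL : 0 < L) :
    IsArcLengthCurveOn (xc x0 L) (yc x0 L) (tangentAngle x0 L) (Hc x0 L)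
      (Ioo (L - kap x0 L) (L + kap x0 L)) where
  hasDerivAt_fst _ hs := hasDerivAt_xc hx0 hL hs
  hasDerivAt_snd _ hs := hasDerivAt_yc hx0 hL hs
  hasDerivAt_angle _ hs := hasDerivAt_tangentAngle hx0 hL hs

end CriticalCurve

theorem statement11_general (x0 L : ℝ) (hx0 : 0 < x0) (hL : 0 < L) (hne : L ≠ 3 * x0)
    (φ φτ : ℝ → ℝ) (hφ : ContDiff ℝ 2 φ) (hφτ : ContDiff ℝ 2 φτ)
    (hb0 : φ 0 = 0) (hb1 : φ (2 * L) = 0) (hb2 : φτ 0 = 0) (hb3 : φτ (2 * L) = 0) :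
    ∃ F' : ℝ → ℝ,
      (∀ᶠ t in nhds (0:ℝ), HasDerivAt (Fvar x0 L φ φτ) (F' t) t) ∧
      HasDerivAt F'
        ((∫ s in (0:ℝ)..(2 * L),
            (2 * Hc x0 L s * φ s ^ 2 - 2 * deriv φ s ^ 2 / Hc x0 L s +
              2 * deriv (deriv φ) s ^ 2 / Hc x0 L s ^ 3)) +
          2 * L / (L + x0) *
            (∫ s in (0:ℝ)..(2 * L),
              (Hc x0 L s * φτ s ^ 2 + 2 * φ s * deriv φτ s)) -
          (2 * deriv φ (2 * L) * deriv φτ (2 * L) / Hc x0 L (2 * L) ^ 2 -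
            2 * deriv φ 0 * deriv φτ 0 / Hc x0 L 0 ^ 2))
        0 := by
  have hab := uIcc_subset_Ioo_kap hx0 hL hne
  have hH : ∀ s ∈ Ioo (L - kap x0 L) (L + kap x0 L), HasDerivAt (Hc x0 L) _ s :=
    fun _ hs ↦ hasDerivAt_Hc hx0 hL hs
  have hH₀ : ∀ s ∈ Ioo (L - kap x0 L) (L + kap x0 L), Hc x0 L s ≠ 0 :=
    fun _ hs ↦ (Hc_pos hx0 hL hs).ne'
  have hlam : 2 * L / (L + x0) = 2 - 2 * (x0 / (L + x0)) := by
    field_simp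
    ring
  obtain ⟨F', hF', hF''⟩ :=
    (isArcLengthCurveOn_critical hx0 hL).exists_hasDerivAt_totalInverseCurvature isOpen_Ioo hab
      (contDiffOn_one_of_hasDerivAt_cubic isOpen_Ioo hH) (fun s hs ↦ hH₀ s (hab hs))
      hφ.contDiffOn hφτ.contDiffOn
  rw [integral_secondVariationDensity isOpen_Ioo hab hH hH₀ hφ.contDiffOn hφτ.contDiffOn
    hb0 hb1 hb2 hb3, ← hlam] at hF''
  exact ⟨F', hF', hF''⟩

/-- second variation of the total inverse curvature at the critical curve, for a
geodesic variation with velocity `X = φN + φ_τ γ̇`, with `λ = 2L/(L+x₀)`. -/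
theorem statement11 (x0 L : ℝ) (hx0 : 0 < x0) (hL : 3 * x0 < L) (φ φτ : ℝ → ℝ)
    (hφ : ContDiff ℝ (⊤ : ℕ∞) φ) (hφτ : ContDiff ℝ (⊤ : ℕ∞) φτ)
    (hb0 : φ 0 = 0) (hb1 : φ (2 * L) = 0) (hb2 : φτ 0 = 0) (hb3 : φτ (2 * L) = 0) :
    ∃ F' : ℝ → ℝ,
      (∀ᶠ t in nhds (0:ℝ), HasDerivAt (Fvar x0 L φ φτ) (F' t) t) ∧
      HasDerivAt F'
        ((∫ s in (0:ℝ)..(2 * L),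
            (2 * Hc x0 L s * φ s ^ 2 - 2 * deriv φ s ^ 2 / Hc x0 L s +
              2 * deriv (deriv φ) s ^ 2 / Hc x0 L s ^ 3)) +
          2 * L / (L + x0) *
            (∫ s in (0:ℝ)..(2 * L),
              (Hc x0 L s * φτ s ^ 2 + 2 * φ s * deriv φτ s)) -
          (2 * deriv φ (2 * L) * deriv φτ (2 * L) / Hc x0 L (2 * L) ^ 2 -
            2 * deriv φ 0 * deriv φτ 0 / Hc x0 L 0 ^ 2))
        0 := by
  exact statement11_general x0 L hx0 (by linarith) hL.ne' φ φτ
    (contDiff_infty.1 hφ 2) (contDiff_infty.1 hφτ 2) hb0 hb1 hb2 hb3
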